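/- arXiv:1404.1624 — 2 statements merged into one kernel-verified Lean document; each statement's English description precedes it below -/
import Mathlib

section
/- Let X be a real Banach space and let T : X → X be a continuous mapping that is compact, i.e. it maps bounded subsets of X to sets with compact closure. Suppose there exists R > 0 such that every x ∈ X satisfying x = λ • T x for some λ ∈ [0,1] obeys ‖x‖ ≤ R. Then T possesses a fixed point, i.e. there exists x ∈ X with T x = x. -/
/-!
Truncating `T` radially outside a ball of radius `M > R` gives a continuous map with relatively
compact range. Such a map has a fixed point (Schauder), and the a priori bound forces that point
into the ball, where the truncation does nothing.

Schauder's theorem follows from Brouwer's by replacing the map with maps into the span of finitely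
many points, through a partition of unity. For Brouwer's theorem we follow Milnor and Rogers. If `f`
is `C¹` and the identity on the boundary of a compact convex set `s`, then for small `t` the map
`(1 - t) • id + t • f` is a bijection of `s`, so the integral over `s` of its Jacobian is the volume
of `s`. This integral is polynomial in `t`, so the same holds at `t = 1`. A `C¹` retraction
onto the boundary is impossible because its Jacobian would vanish. A bounded `C¹` map `f` without
fixed point would yield such a retraction, by cutting `f` off and normalizing `x - f x`.
-/

open Set Filter Topology Metric Bornology MeasureTheory Function Module

section Topology

theorem inter_frontier_nonempty_of_isPreconnected {α : Type*} [TopologicalSpace α] {s t : Set α}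
    (ht : IsPreconnected t) (hts : (t ∩ s).Nonempty) (hts' : (t ∩ sᶜ).Nonempty) :
    (t ∩ frontier s).Nonempty := by
  by_contra hempty
  have hcover : t ⊆ interior s ∪ interior sᶜ := fun x hx => by
    rw [← compl_frontier_eq_union_interior]
    exact fun hxs => hempty ⟨x, hx, hxs⟩
  obtain ⟨x, hxt, hxs⟩ := hts
  obtain ⟨y, hyt, hys⟩ := hts'
  have hx : x ∈ interior s :=
    (hcover hxt).resolve_right fun h => interior_subset h hxs
  have hy : y ∈ interior sᶜ :=
    (hcover hyt).resolve_left fun h => hys (interior_subset h)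
  obtain ⟨z, -, hz, hz'⟩ :=
    ht _ _ isOpen_interior isOpen_interior hcover ⟨x, hxt, hx⟩ ⟨y, hyt, hy⟩
  exact interior_subset hz' (interior_subset hz)

theorem image_eq_of_bijective_of_eqOn_compl {α : Type*} {f : α → α} {s : Set α}
    (hf : Bijective f) (hfs : EqOn f id sᶜ) : f '' s = s := by
  rw [← compl_inj_iff, ← image_compl_eq hf, hfs.image_eq, image_id]

theorem exists_isFixedPt_of_forall_exists_dist_lt {X : Type*} [MetricSpace X] {F : X → X}
    (hF : Continuous F) (hK : IsCompact (closure (range F)))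
    (happrox : ∀ ε > 0, ∃ x, dist x (F x) < ε) : ∃ x, IsFixedPt F x := by
  choose x hx using fun n : ℕ => happrox (1 / ((n : ℝ) + 1)) Nat.one_div_pos_of_nat
  obtain ⟨y, -, φ, hφ, hFy⟩ := hK.tendsto_subseq fun n => subset_closure (mem_range_self (x n))
  have hdist : Tendsto (fun n => dist (F (x (φ n))) (x (φ n))) atTop (𝓝 0) := by
    refine squeeze_zero (fun _ => dist_nonneg) (fun n => ?_)
      (tendsto_one_div_add_atTop_nhds_zero_nat.comp hφ.tendsto_atTop)
    rw [dist_comm]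
    exact (hx (φ n)).le
  have hxy : Tendsto (x ∘ φ) atTop (𝓝 y) := (tendsto_iff_of_dist hdist).1 hFy
  exact ⟨y, tendsto_nhds_unique ((hF.tendsto y).comp hxy) hFy⟩

end Topology

section Lipschitz

variable {E : Type*} [NormedAddCommGroup E] [NormedSpace ℝ E] {K : NNReal} {s : Set E}

theorem lipschitzWith_indicator_of_eqOn_zero_frontier {F : Type*} [SeminormedAddCommGroup F]
    {h : E → F} (hs : IsClosed s) (hh : LipschitzOnWith K h s) (h0 : EqOn h 0 (frontier s)) :
    LipschitzWith K (s.indicator h) := by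
  have hcross : ∀ x ∈ s, ∀ y ∉ s, ‖h x‖ ≤ K * dist x y := by
    intro x hx y hy
    obtain ⟨z, hzxy, hz⟩ := inter_frontier_nonempty_of_isPreconnected
      (convex_segment (𝕜 := ℝ) x y).isPreconnected
      ⟨x, left_mem_segment ℝ x y, hx⟩ ⟨y, right_mem_segment ℝ x y, hy⟩
    calc ‖h x‖ = dist (h x) (h z) := by rw [h0 hz, Pi.zero_apply, dist_zero_right]
      _ ≤ K * dist x z := hh.dist_le_mul x hx z (hs.frontier_subset hz)
      _ ≤ K * dist x y := by
        gcongr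
        rw [← dist_add_dist_of_mem_segment hzxy]
        exact le_add_of_nonneg_right dist_nonneg
  refine LipschitzWith.of_dist_le_mul fun x y => ?_
  by_cases hx : x ∈ s <;> by_cases hy : y ∈ s
  · simpa only [indicator_of_mem, hx, hy] using hh.dist_le_mul x hx y hy
  · simpa only [indicator_of_mem hx, indicator_of_notMem hy, dist_zero_right] using hcross x hx y hy
  · simpa only [indicator_of_mem hy, indicator_of_notMem hx, dist_zero_left, dist_comm x y]
      using hcross y hy x hx
  · simp only [indicator_of_notMem, hx, hy, not_false_eq_true, dist_self]
    positivity

theorem bijective_id_add_of_lipschitzWith_lt_one {G : Type*} [NormedAddCommGroup G]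
    [CompleteSpace G] {h : G → G} (hh : LipschitzWith K h) (hK : K < 1) :
    Bijective (fun x => x + h x) := by
  refine (bijective_iff_existsUnique _).2 fun y => ?_
  have hcontract : ContractingWith K (fun x => y - h x) :=
    ⟨hK, LipschitzWith.of_dist_le_mul fun x z => by
      simpa only [dist_sub_left] using hh.dist_le_mul x z⟩
  refine ⟨hcontract.fixedPoint, ?_, fun z hz => ?_⟩
  · exact (sub_eq_iff_eq_add.1 hcontract.fixedPoint_isFixedPt.eq).symm
  · exact hcontract.fixedPoint_unique (sub_eq_iff_eq_add.2 hz.symm)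

theorem bijOn_id_add_smul_of_lipschitzOnWith [CompleteSpace E] {h : E → E}
    (hs : IsClosed s) (hh : LipschitzOnWith K h s) (h0 : EqOn h 0 (frontier s))
    {t : ℝ} (ht : ‖t‖₊ * K < 1) :
    BijOn (fun x => x + t • h x) s s := by
  have hbij : Bijective (fun x => x + t • s.indicator h x) :=
    bijective_id_add_of_lipschitzWith_lt_one
      ((lipschitzWith_smul t).comp (lipschitzWith_indicator_of_eqOn_zero_frontier hs hh h0)) ht
  have himage := image_eq_of_bijective_of_eqOn_compl (s := s) hbij fun x hx => by
    simp [indicator_of_notMem hx]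
  have hbijOn : BijOn (fun x => x + t • s.indicator h x) s s :=
    ⟨(mapsTo_image _ _).mono_right himage.subset, hbij.injective.injOn, himage.superset⟩
  exact hbijOn.congr fun x hx => by simp only [indicator_of_mem hx]

end Lipschitz

section Jacobian

theorem exists_polynomial_eval_eq_det_one_add_smul {R M : Type*} [CommRing R] [Nontrivial R]
    [AddCommGroup M] [Module R M] [Module.Free R M] [Module.Finite R M] (A : M →ₗ[R] M) :
    ∃ p : Polynomial R, p.natDegree ≤ finrank R M ∧ ∀ t, p.eval t = (1 + t • A).det := by
  classical
  let b := Module.Free.chooseBasis R M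
  let B := LinearMap.toMatrix b b A
  refine ⟨((Polynomial.X : Polynomial R) • B.map Polynomial.C
    + (1 : Matrix _ _ R).map Polynomial.C).det, ?_, fun t => ?_⟩
  · rw [finrank_eq_card_chooseBasisIndex]
    exact Polynomial.natDegree_det_X_add_C_le B 1
  · rw [← LinearMap.det_toMatrix b, ← Polynomial.coe_evalRingHom, RingHom.map_det]
    congr 1
    ext i j
    rcases eq_or_ne i j with rfl | hij
    · simp [B, LinearMap.toMatrix_one, mul_comm t, add_comm]
    · simp [B, LinearMap.toMatrix_one, hij, mul_comm t]

variable {E : Type*} [NormedAddCommGroup E] [NormedSpace ℝ E] [FiniteDimensional ℝ E]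

theorem integral_det_one_add_smul_eq_of_infinite {α : Type*} [MeasurableSpace α] {μ : Measure α}
    {A : α → E →L[ℝ] E} (hA : ∀ t : ℝ, Integrable (fun x => (1 + t • A x).det) μ)
    {S : Set ℝ} (hS : S.Infinite) {c : ℝ} (hc : ∀ t ∈ S, ∫ x, (1 + t • A x).det ∂μ = c) (t : ℝ) :
    ∫ x, (1 + t • A x).det ∂μ = c := by
  obtain ⟨nodes, hnodes, hcard⟩ := hS.exists_subset_card_eq (finrank ℝ E + 1)
  have hnonempty : nodes.Nonempty := Finset.card_pos.1 (by omega)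
  let L : ℝ → ℝ := fun u => (Lagrange.basis nodes id u).eval t
  have hL : ∑ u ∈ nodes, L u = 1 := by
    rw [← Polynomial.eval_finsetSum, Lagrange.sum_basis injective_id.injOn hnonempty,
      Polynomial.eval_one]
  have hinterp : ∀ x, (1 + t • A x).det = ∑ u ∈ nodes, (1 + u • A x).det * L u := by
    intro x
    obtain ⟨p, hdeg, hp⟩ := exists_polynomial_eval_eq_det_one_add_smul (A x : E →ₗ[ℝ] E)
    have hdeg' : p.degree < nodes.card :=
      Polynomial.degree_le_natDegree.trans_lt (Nat.cast_lt.2 (by omega))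
    have := congrArg (Polynomial.eval t) (Lagrange.eq_interpolate injective_id.injOn hdeg')
    simpa [L, ContinuousLinearMap.det, Lagrange.interpolate_apply, Polynomial.eval_finsetSum, hp]
      using this
  calc ∫ x, (1 + t • A x).det ∂μ
      = ∑ u ∈ nodes, (∫ x, (1 + u • A x).det ∂μ) * L u := by
        simp only [hinterp, ← integral_mul_const]
        exact integral_finsetSum _ fun u _ => (hA u).mul_const _
    _ = ∑ u ∈ nodes, c * L u := Finset.sum_congr rfl fun u hu => by rw [hc u (hnodes hu)]
    _ = c := by rw [← Finset.mul_sum, hL, mul_one]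

theorem setIntegral_det_fderiv_eq_of_bijOn [MeasurableSpace E] [BorelSpace E]
    (μ : Measure E) [μ.IsAddHaarMeasure] {f : E → E} {f' : E → E →L[ℝ] E} {s : Set E}
    (hs : MeasurableSet s) (hf : ∀ x ∈ s, HasFDerivWithinAt f (f' x) s x) (hbij : BijOn f s s)
    (hdet : ∀ x ∈ s, 0 ≤ (f' x).det) : ∫ x in s, (f' x).det ∂μ = μ.real s := by
  calc ∫ x in s, (f' x).det ∂μ = ∫ x in s, |(f' x).det| • (1 : ℝ) ∂μ :=
        setIntegral_congr_fun hs fun x hx => by simp [abs_of_nonneg (hdet x hx)]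
    _ = ∫ _ in f '' s, (1 : ℝ) ∂μ :=
        (integral_image_eq_integral_abs_det_fderiv_smul μ hs hf hbij.injOn fun _ => 1).symm
    _ = μ.real s := by simp [hbij.image_eq]

theorem setIntegral_det_fderiv_eq_of_eqOn_id_frontier [MeasurableSpace E] [BorelSpace E]
    (μ : Measure E) [μ.IsAddHaarMeasure] {f : E → E} {s : Set E} (hf : ContDiff ℝ 1 f)
    (hs : IsCompact s) (hconv : Convex ℝ s) (hfs : EqOn f id (frontier s)) :
    ∫ x in s, (fderiv ℝ f x).det ∂μ = μ.real s := by
  let A : E → E →L[ℝ] E := fun x => fderiv ℝ f x - 1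
  have hA : Continuous A := (hf.continuous_fderiv one_ne_zero).sub continuous_const
  have hdet : Continuous fun p : ℝ × E => (1 + p.1 • A p.2).det :=
    ContinuousLinearMap.continuous_det.comp
      (continuous_const.add (continuous_fst.smul (hA.comp continuous_snd)))
  obtain ⟨K, hK⟩ := (hf.sub contDiff_id).contDiffOn.exists_lipschitzOnWith one_ne_zero hconv hs
  have hsmall : ∀ᶠ t : ℝ in 𝓝 0, ‖t‖₊ * K < 1 :=
    ContinuousAt.eventually_lt (by fun_prop) continuousAt_const (by simp)
  have hpos : ∀ᶠ t : ℝ in 𝓝 0, ∀ x ∈ s, 0 < (1 + t • A x).det :=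
    hs.eventually_forall_of_forall_eventually fun x _ =>
      hdet.continuousAt.eventually_const_lt (by simp [ContinuousLinearMap.det])
  have hnear : ∀ᶠ t : ℝ in 𝓝 0, ∫ x in s, (1 + t • A x).det ∂μ = μ.real s := by
    filter_upwards [hsmall, hpos] with t htK htdet
    refine setIntegral_det_fderiv_eq_of_bijOn μ hs.measurableSet (fun x _ => ?_)
      (bijOn_id_add_smul_of_lipschitzOnWith hs.isClosed hK (fun x hx => ?_) htK)
      fun x hx => (htdet x hx).le
    · have hfx := (hf.differentiable one_ne_zero x).hasFDerivAt
      exact ((hasFDerivAt_id x).add ((hfx.sub (hasFDerivAt_id x)).const_smul t)).hasFDerivWithinAt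
    · simp [hfs hx]
  have hintegrable : ∀ t : ℝ, IntegrableOn (fun x => (1 + t • A x).det) s μ := fun t =>
    (hdet.comp (Continuous.prodMk_right t)).continuousOn.integrableOn_compact hs
  have hone := integral_det_one_add_smul_eq_of_infinite hintegrable (infinite_of_mem_nhds 0 hnear)
    (fun _ ht => ht) 1
  simpa [A] using hone

end Jacobian

section Brouwer

theorem det_fderiv_eq_zero_of_mapsTo_of_interior_eq_empty {E : Type*} [NormedAddCommGroup E]
    [NormedSpace ℝ E] [FiniteDimensional ℝ E] {f : E → E} {s t : Set E} {x : E}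
    (hf : ContDiffAt ℝ 1 f x) (hfst : MapsTo f s t) (hs : s ∈ 𝓝 x) (ht : interior t = ∅) :
    (fderiv ℝ f x).det = 0 := by
  by_contra hdet
  have hstrict : HasStrictFDerivAt f
      ((fderiv ℝ f x).toContinuousLinearEquivOfDetNeZero hdet : E →L[ℝ] E) x :=
    hf.hasStrictFDerivAt one_ne_zero
  have himage : t ∈ 𝓝 (f x) := by
    rw [← hstrict.map_nhds_eq_of_equiv]
    exact mem_map.2 (mem_of_superset hs hfst)
  exact (ht ▸ mem_interior_iff_mem_nhds.2 himage : f x ∈ (∅ : Set E))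

theorem not_eqOn_id_frontier_of_mapsTo_frontier {E : Type*} [NormedAddCommGroup E]
    [NormedSpace ℝ E] [FiniteDimensional ℝ E] {f : E → E} {s : Set E} (hf : ContDiff ℝ 1 f)
    (hs : IsCompact s) (hconv : Convex ℝ s) (hinterior : (interior s).Nonempty)
    (hmaps : MapsTo f s (frontier s)) : ¬ EqOn f id (frontier s) := by
  intro hfs
  borelize E
  let μ : Measure E := Measure.addHaar
  have hae : interior s =ᵐ[μ] s :=
    interior_ae_eq_of_null_frontier (hconv.addHaar_frontier μ)
  have hzero : ∫ x in s, (fderiv ℝ f x).det ∂μ = 0 := by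
    rw [← setIntegral_congr_set hae]
    exact setIntegral_eq_zero_of_forall_eq_zero fun x hx =>
      det_fderiv_eq_zero_of_mapsTo_of_interior_eq_empty hf.contDiffAt hmaps
        (mem_interior_iff_mem_nhds.1 hx) (interior_frontier hs.isClosed)
  have hpos : 0 < μ.real s :=
    ENNReal.toReal_pos (Measure.measure_pos_of_nonempty_interior μ hinterior).ne'
      hs.measure_lt_top.ne
  rw [← setIntegral_det_fderiv_eq_of_eqOn_id_frontier μ hf hs hconv hfs, hzero] at hpos
  exact hpos.false

variable {E : Type*} [NormedAddCommGroup E] [InnerProductSpace ℝ E] [FiniteDimensional ℝ E]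
  {f : E → E}

theorem exists_eq_zero_of_contDiff_of_eqOn_id_sphere {R : ℝ} (hR : 0 < R) (hf : ContDiff ℝ 1 f)
    (hfR : EqOn f id (sphere 0 R)) : ∃ x, f x = 0 := by
  by_contra! hne
  have hretract : ContDiff ℝ 1 fun x => (R / ‖f x‖) • f x :=
    (contDiff_const.div (hf.norm ℝ hne) fun x => norm_ne_zero_iff.2 (hne x)).smul hf
  have hfrontier : frontier (closedBall (0 : E) R) = sphere 0 R := frontier_closedBall 0 hR.ne'
  refine not_eqOn_id_frontier_of_mapsTo_frontier hretract (isCompact_closedBall 0 R)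
    (convex_closedBall 0 R) ((nonempty_ball.2 hR).mono ball_subset_interior_closedBall) ?_ ?_
  · intro x _
    rw [hfrontier, mem_sphere_zero_iff_norm, norm_smul, norm_div, norm_norm,
      Real.norm_of_nonneg hR.le, div_mul_cancel₀ _ (norm_ne_zero_iff.2 (hne x))]
  · intro x hx
    rw [hfrontier] at hx
    simp [hfR hx, mem_sphere_zero_iff_norm.1 hx, hR.ne']

theorem exists_isFixedPt_of_contDiff_of_isBounded_range (hf : ContDiff ℝ 1 f)
    (hbdd : IsBounded (range f)) : ∃ x, IsFixedPt f x := by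
  obtain ⟨M, hM, hfM⟩ : ∃ M > 0, ∀ x, ‖f x‖ ≤ M := by
    obtain ⟨M, hM, hfM⟩ := hbdd.exists_pos_norm_le
    exact ⟨M, hM, fun x => hfM _ (mem_range_self x)⟩
  let χ : ContDiffBump (0 : E) := ⟨M, 2 * M, hM, by linarith⟩
  obtain ⟨x, hx⟩ : ∃ x, x - χ x • f x = 0 := by
    refine exists_eq_zero_of_contDiff_of_eqOn_id_sphere χ.rOut_pos
      (contDiff_id.sub (χ.contDiff.smul hf)) fun x hx => ?_
    simp [χ.zero_of_le_dist (mem_sphere.1 hx).ge]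
  have hxM : x ∈ closedBall 0 χ.rIn := by
    rw [mem_closedBall_zero_iff, sub_eq_zero.1 hx, norm_smul, Real.norm_of_nonneg χ.nonneg]
    exact (mul_le_of_le_one_left (norm_nonneg _) χ.le_one).trans (hfM x)
  rw [χ.one_of_mem_closedBall hxM, one_smul, sub_eq_zero] at hx
  exact ⟨x, hx.symm⟩

theorem exists_isFixedPt_of_continuous_of_isBounded_range (hf : Continuous f)
    (hbdd : IsBounded (range f)) : ∃ x, IsFixedPt f x := by
  refine exists_isFixedPt_of_forall_exists_dist_lt hf hbdd.isCompact_closure fun ε hε => ?_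
  obtain ⟨g, hg, hgf, -⟩ := hf.exists_contDiff_approx 1 continuous_const fun _ => hε
  have hgbdd : IsBounded (range g) := by
    refine (hbdd.thickening (δ := ε)).subset (range_subset_iff.2 fun x => ?_)
    exact mem_thickening_iff.2 ⟨f x, mem_range_self x, hgf x⟩
  obtain ⟨x, hx⟩ := exists_isFixedPt_of_contDiff_of_isBounded_range hg hgbdd
  exact ⟨x, by simpa only [hx.eq] using hgf x⟩

end Brouwer

section Schauder

variable {X : Type*} [NormedAddCommGroup X] [NormedSpace ℝ X] {F : X → X}

theorem exists_dist_lt_of_isCompact_closure_range (hF : Continuous F)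
    (hK : IsCompact (closure (range F))) {ε : ℝ} (hε : 0 < ε) : ∃ x, dist x (F x) < ε := by
  obtain ⟨t, -, ht, hcover⟩ := hK.finite_cover_balls hε
  have := ht.fintype
  obtain ⟨w, hw⟩ := PartitionOfUnity.exists_isSubordinate isClosed_closure
    (fun i : t => ball (i : X) ε) (fun _ => isOpen_ball) (by rwa [iUnion_coe_set])
  let combine : EuclideanSpace ℝ t → X := fun a => ∑ i, a i • (i : X)
  let weights : EuclideanSpace ℝ t → EuclideanSpace ℝ t :=
    fun a => WithLp.toLp 2 fun i => w i (F (combine a))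
  have hcombine : Continuous combine := by fun_prop
  have hweights : Continuous weights :=
    (PiLp.continuous_toLp 2 _).comp
      (continuous_pi fun i => (w i).continuous.comp (hF.comp hcombine))
  have hbdd : IsBounded (range weights) := by
    refine ((isCompact_Icc (a := (0 : t → ℝ)) (b := 1)).image
      (PiLp.continuous_toLp 2 _)).isBounded.subset (range_subset_iff.2 fun a => ?_)
    exact mem_image_of_mem _ ⟨fun i => w.nonneg i _, fun i => w.le_one i _⟩
  obtain ⟨a, ha⟩ := exists_isFixedPt_of_continuous_of_isBounded_range hweights hbdd
  refine ⟨combine a, ?_⟩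
  have hmem : ∑ᶠ i, w i (F (combine a)) • (i : X) ∈ ball (F (combine a)) ε :=
    w.finsum_smul_mem_convex (g := fun i _ => (i : X)) (subset_closure (mem_range_self _))
      (fun i hi => mem_ball_comm.1 (hw i (subset_tsupport _ hi))) (convex_ball _ _)
  have hfix : combine a = ∑ᶠ i, w i (F (combine a)) • (i : X) := by
    rw [finsum_eq_sum_of_fintype]
    exact Finset.sum_congr rfl fun i _ => by
      rw [← congrArg (fun b : EuclideanSpace ℝ t => b i) ha.eq]
  rw [← hfix] at hmem
  exact hmem

theorem exists_isFixedPt_of_isCompact_closure_range (hF : Continuous F)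
    (hK : IsCompact (closure (range F))) : ∃ x, IsFixedPt F x :=
  exists_isFixedPt_of_forall_exists_dist_lt hF hK fun _ hε =>
    exists_dist_lt_of_isCompact_closure_range hF hK hε

end Schauder

section LeraySchauder

variable {X : Type*} [SeminormedAddCommGroup X] [NormedSpace ℝ X] {M : ℝ}

/-- The retraction of `X` onto the closed ball of radius `M > 0` about the origin which moves every
point outside the ball along its ray. The factor is `1` inside the ball and `M / ‖x‖` outside. -/
noncomputable def radialRetraction (M : ℝ) (x : X) : X := (M / max M ‖x‖) • x

theorem continuous_radialRetraction (hM : 0 < M) : Continuous (radialRetraction M : X → X) :=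
  (continuous_const.div (continuous_const.max continuous_norm) fun _ =>
    (lt_max_of_lt_left hM).ne').smul continuous_id

theorem radialRetraction_of_norm_le (hM : 0 < M) {x : X} (hx : ‖x‖ ≤ M) :
    radialRetraction M x = x := by
  rw [radialRetraction, max_eq_left hx, div_self hM.ne', one_smul]

theorem radialRetraction_of_le_norm {x : X} (hx : M ≤ ‖x‖) :
    radialRetraction M x = (M / ‖x‖) • x := by
  rw [radialRetraction, max_eq_right hx]

theorem norm_radialRetraction_of_le_norm (hM : 0 < M) {x : X} (hx : M ≤ ‖x‖) :
    ‖radialRetraction M x‖ = M := by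
  rw [radialRetraction_of_le_norm hx, norm_smul, norm_div, norm_norm, Real.norm_of_nonneg hM.le,
    div_mul_cancel₀ _ (hM.trans_le hx).ne']

theorem radialRetraction_mem_closedBall (hM : 0 < M) (x : X) :
    radialRetraction M x ∈ closedBall 0 M := by
  rw [mem_closedBall_zero_iff]
  rcases le_total ‖x‖ M with hx | hx
  · rwa [radialRetraction_of_norm_le hM hx]
  · exact (norm_radialRetraction_of_le_norm hM hx).le

end LeraySchauder

theorem leray_schauder_fixed_point_general {X : Type*} [NormedAddCommGroup X] [NormedSpace ℝ X]
    {T : X → X} {M : ℝ} (hM : 0 < M) (hT : ContinuousOn T (closedBall 0 M))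
    (hcomp : IsCompact (closure (T '' closedBall 0 M)))
    (hbound : ∀ x ∈ sphere (0 : X) M, ∀ l ∈ Ioo (0 : ℝ) 1, x ≠ l • T x) :
    ∃ x ∈ closedBall (0 : X) M, T x = x := by
  have hmem := radialRetraction_mem_closedBall (X := X) hM
  have hrange : range (T ∘ radialRetraction M) ⊆ T '' closedBall 0 M :=
    range_subset_iff.2 fun x => mem_image_of_mem T (hmem x)
  obtain ⟨y, hy⟩ := exists_isFixedPt_of_isCompact_closure_range
    (hT.comp_continuous (continuous_radialRetraction hM) hmem)
    (hcomp.of_isClosed_subset isClosed_closure (closure_mono hrange))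
  have hTy : T (radialRetraction M y) = y := hy
  rcases le_or_gt ‖y‖ M with hyM | hyM
  · rw [radialRetraction_of_norm_le hM hyM] at hTy
    exact ⟨y, mem_closedBall_zero_iff.2 hyM, hTy⟩
  · refine absurd ?_ (hbound (radialRetraction M y)
      (mem_sphere_zero_iff_norm.2 (norm_radialRetraction_of_le_norm hM hyM.le))
      (M / ‖y‖) ⟨div_pos hM (hM.trans hyM), (div_lt_one (hM.trans hyM)).2 hyM⟩)
    rw [hTy, radialRetraction_of_le_norm hyM.le]

/-- Leray–Schauder fixed point theorem: a continuous compact self-map of a real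
Banach space whose "λ-fixed points" are uniformly bounded has a fixed point. -/
theorem leray_schauder_fixed_point
    {X : Type*} [NormedAddCommGroup X] [NormedSpace ℝ X] [CompleteSpace X]
    (T : X → X) (hT : Continuous T)
    (hcomp : ∀ s : Set X, Bornology.IsBounded s → IsCompact (closure (T '' s)))
    (R : ℝ) (hR : 0 < R)
    (hbound : ∀ x : X, (∃ l : ℝ, l ∈ Set.Icc (0 : ℝ) 1 ∧ x = l • T x) → ‖x‖ ≤ R) :
    ∃ x : X, T x = x := by
  obtain ⟨x, -, hx⟩ := leray_schauder_fixed_point_general (M := R + 1) (by linarith)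
    hT.continuousOn (hcomp _ isBounded_closedBall) fun x hxM l hl hxl => by
      linarith [hbound x ⟨l, Ioo_subset_Icc_self hl, hxl⟩, mem_sphere_zero_iff_norm.1 hxM]
  exact ⟨x, hx⟩
end

section
/- For every real γ > 23/15: (i) the interval (1, min{(5γ−3)/(3γ), 1 + (−5 + √(5(180γ²−456γ+281)))/(30γ), (γ+1)/γ}) is nonempty; and (ii) every a in this interval satisfies 15(aγ)² + aγ(5 − 30γ) + 33γ − 23 < 0. -/
/-! At `a = 1` the quadratic equals `-(15γ - 23)(γ - 1)`, and for `γ > 0` the point `a = 1` lies to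
the right of its vertex. Hence on `[1, ∞)` the quadratic is negative exactly to the left of its
larger root, and that root exceeds `1` exactly when `(15γ - 23)(γ - 1) > 0`. The bound
`(5γ - 3) / (3γ)` exceeds `1` only for `γ > 3/2`, which excludes the branch `γ < 1`. -/

theorem quadratic_neg_iff_abs_lt_sqrt_discrim {a : ℝ} (ha : 0 < a) (b c x : ℝ) :
    a * x ^ 2 + b * x + c < 0 ↔ |2 * a * x + b| < √(discrim a b c) := by
  have complete_square :
      (2 * a * x + b) ^ 2 - discrim a b c = 4 * a * (a * x ^ 2 + b * x + c) := by
    rw [discrim]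
    ring
  rw [Real.lt_sqrt (abs_nonneg _), sq_abs, ← sub_neg (b := discrim a b c), complete_square,
    ← smul_eq_mul (4 * a), smul_neg_iff_of_pos_left (by positivity)]

/-- The larger root in `a` of `15(aγ)² + aγ(5 − 30γ) + 33γ − 23` when `γ > 0` and the discriminant
is nonnegative. -/
noncomputable def convectiveRoot (γ : ℝ) : ℝ :=
  1 + (-5 + √(5 * (180 * γ ^ 2 - 456 * γ + 281))) / (30 * γ)

/-- The least of the upper bounds imposed on the exponent `a` of the Bogovskii test function. -/
noncomputable def exponentBound (γ : ℝ) : ℝ :=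
  min (min ((5 * γ - 3) / (3 * γ)) (convectiveRoot γ)) ((γ + 1) / γ)

section

variable {γ : ℝ} (hγ : 0 < γ)
include hγ

theorem lt_convectiveRoot_iff (a : ℝ) :
    a < convectiveRoot γ ↔
      30 * γ * (a - 1) + 5 < √(5 * (180 * γ ^ 2 - 456 * γ + 281)) := by
  rw [convectiveRoot, ← sub_lt_iff_lt_add', lt_div_iff₀ (by positivity), lt_neg_add_iff_add_lt,
    mul_comm (a - 1), add_comm 5]

theorem convective_quadratic_neg_iff {a : ℝ} (ha : 1 ≤ a) :
    15 * (a * γ) ^ 2 + (a * γ) * (5 - 30 * γ) + 33 * γ - 23 < 0 ↔ a < convectiveRoot γ := by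
  have discrim_eq :
      discrim 15 (5 - 30 * γ) (33 * γ - 23) = 5 * (180 * γ ^ 2 - 456 * γ + 281) := by
    rw [discrim]
    ring
  have slope_eq : 2 * 15 * (a * γ) + (5 - 30 * γ) = 30 * γ * (a - 1) + 5 := by ring
  have slope_nonneg : 0 ≤ 30 * γ * (a - 1) + 5 := by
    have := sub_nonneg.mpr ha
    positivity
  rw [mul_comm (a * γ), add_sub_assoc, quadratic_neg_iff_abs_lt_sqrt_discrim (by norm_num),
    discrim_eq, slope_eq, abs_of_nonneg slope_nonneg, lt_convectiveRoot_iff hγ]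

theorem one_lt_convectiveRoot_iff : 1 < convectiveRoot γ ↔ 0 < (15 * γ - 23) * (γ - 1) := by
  rw [← convective_quadratic_neg_iff hγ le_rfl, ← neg_neg_iff_pos]
  ring_nf

theorem one_lt_exponentBound_iff : 1 < exponentBound γ ↔ 23 / 15 < γ := by
  rw [exponentBound, lt_min_iff, lt_min_iff, one_lt_div (by positivity),
    one_lt_convectiveRoot_iff hγ, one_lt_div hγ]
  constructor
  · rintro ⟨⟨hbound, hroot⟩, -⟩
    have : 0 < 15 * γ - 23 := pos_of_mul_pos_left hroot (by linarith)
    linarith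
  · intro h
    exact ⟨⟨by linarith, mul_pos (by linarith) (by linarith)⟩, by linarith⟩

end

theorem admissible_interval_for_a_general {γ : ℝ} (hγ : 0 < γ) :
    ((Set.Ioo 1 (exponentBound γ)).Nonempty ↔ 23 / 15 < γ) ∧
      ∀ a ∈ Set.Ioo 1 (exponentBound γ),
        15 * (a * γ) ^ 2 + (a * γ) * (5 - 30 * γ) + 33 * γ - 23 < 0 := by
  refine ⟨Set.nonempty_Ioo.trans (one_lt_exponentBound_iff hγ), ?_⟩
  rintro a ⟨one_lt_a, a_lt_bound⟩
  have a_lt_root : a < convectiveRoot γ :=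
    a_lt_bound.trans_le ((min_le_left _ _).trans (min_le_right _ _))
  exact (convective_quadratic_neg_iff hγ one_lt_a.le).mpr a_lt_root

/-- For `γ > 23/15` the admissible interval for the Bogovskii exponent `a` is nonempty,
and every `a` in it makes the quadratic `15(aγ)² + aγ(5−30γ) + 33γ−23` negative. -/
theorem admissible_interval_for_a (γ : ℝ) (hγ : 23 / 15 < γ) :
    (Set.Ioo (1 : ℝ)
      (min (min ((5 * γ - 3) / (3 * γ))
          (1 + (-5 + Real.sqrt (5 * (180 * γ ^ 2 - 456 * γ + 281))) / (30 * γ)))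
        ((γ + 1) / γ))).Nonempty ∧
    ∀ a ∈ Set.Ioo (1 : ℝ)
      (min (min ((5 * γ - 3) / (3 * γ))
          (1 + (-5 + Real.sqrt (5 * (180 * γ ^ 2 - 456 * γ + 281))) / (30 * γ)))
        ((γ + 1) / γ)),
      15 * (a * γ) ^ 2 + (a * γ) * (5 - 30 * γ) + 33 * γ - 23 < 0 :=
  (admissible_interval_for_a_general (by linarith)).imp_left (·.mpr hγ)
end
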